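/- arXiv:1003.3618 — 5 statements merged into one kernel-verified Lean document; each statement's English description precedes it below -/
import Mathlib

section
/- Let A and B be unital C*-algebras. Suppose that for every commutative C*-subalgebra C of A we are given a unital ★-algebra homomorphism f_C : C → B whose range consists of pairwise commuting elements, and that the family is compatible with inclusions: whenever C ⊆ D are commutative C*-subalgebras of A, the restriction of f_D to C equals f_C. Then there exists a unique function m from the set of normal elements of A to B such that m(a) = f_C(a) whenever a is a normal element of A belonging to some commutative C*-subalgebra C. Moreover m satisfies: m(1) = 1; m(a*) = m(a)*; m(z • a) = z • m(a) for all z ∈ ℂ; and whenever a, b are commuting normal elements of A, the elements m(a) and m(b) commute, m(a + b) = m(a) + m(b), and m(a · b) = m(a) · m(b). -/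
theorem exists_comm_closed_pair {A : Type*} [NormedRing A] [StarRing A] [CStarRing A]
    [CompleteSpace A] [NormedAlgebra ℂ A] [StarModule ℂ A] (a b : A) (ha : IsStarNormal a)
    (hb : IsStarNormal b) (hab : a * b = b * a) :
    ∃ C : StarSubalgebra ℂ A, IsClosed (C : Set A) ∧ (∀ x ∈ C, ∀ y ∈ C, x * y = y * x) ∧
      a ∈ C ∧ b ∈ C ∧ ∀ D : StarSubalgebra ℂ A, IsClosed (D : Set A) → a ∈ D → b ∈ D → C ≤ D := by
  letI : CStarAlgebra A := {}
  have hab' : Commute a b := hab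
  have h1 : Commute a (star b) := hb.commute_star_right hab'
  have h2 : Commute b (star a) := ha.commute_star_right hab'.symm
  have haa : Commute (star a) a := ha.star_comm_self
  have hbb : Commute (star b) b := hb.star_comm_self
  have hc : ∀ x ∈ StarAlgebra.adjoin ℂ ({a, b} : Set A),
      ∀ y ∈ StarAlgebra.adjoin ℂ ({a, b} : Set A), x * y = y * x := by
    letI := StarAlgebra.adjoinCommRingOfComm ℂ (s := ({a, b} : Set A))
      (by
        rintro x (rfl | rfl) y (rfl | rfl)
        exacts [rfl, hab, hab.symm, rfl])
      (by
        rintro x (rfl | rfl) y (rfl | rfl)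
        exacts [haa.eq.symm, h1.eq, h2.eq, hbb.eq.symm])
    intro x hx y hy
    exact congrArg Subtype.val (mul_comm (⟨x, hx⟩ : StarAlgebra.adjoin ℂ ({a, b} : Set A)) ⟨y, hy⟩)
  refine ⟨(StarAlgebra.adjoin ℂ ({a, b} : Set A)).topologicalClosure,
    StarSubalgebra.isClosed_topologicalClosure _, ?_, ?_, ?_, ?_⟩
  · intro x hx y hy
    have hx' : x ∈ closure (StarAlgebra.adjoin ℂ ({a, b} : Set A) : Set A) := hx
    have hy' : y ∈ closure (StarAlgebra.adjoin ℂ ({a, b} : Set A) : Set A) := hy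
    have hcl : IsClosed {p : A × A | p.1 * p.2 = p.2 * p.1} :=
      isClosed_eq (by fun_prop) (by fun_prop)
    have hp : (x, y) ∈ closure ((StarAlgebra.adjoin ℂ ({a, b} : Set A) : Set A) ×ˢ
        (StarAlgebra.adjoin ℂ ({a, b} : Set A) : Set A)) := by
      rw [closure_prod_eq]
      exact ⟨hx', hy'⟩
    exact closure_minimal (fun p hp => hc p.1 hp.1 p.2 hp.2) hcl hp
  · exact StarSubalgebra.le_topologicalClosure _ (StarAlgebra.subset_adjoin ℂ _ (by simp))
  · exact StarSubalgebra.le_topologicalClosure _ (StarAlgebra.subset_adjoin ℂ _ (by simp))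
  · intro D hD haD hbD
    refine StarSubalgebra.topologicalClosure_minimal (StarAlgebra.adjoin_le ?_) hD
    rintro x (rfl | rfl) <;> assumption

/-- **Colimit property of a C*-algebra over its commutative C*-subalgebras.**
Given a compatible family of unital ★-algebra homomorphisms `f C : C → B`, defined on all
commutative C*-subalgebras `C` of `A` (topologically closed unital ★-subalgebras with pairwise
commuting elements), with pairwise commuting ranges, there is a unique mediating function `m`
on the normal elements of `A`, and it enjoys the listed algebraic properties. -/
theorem partial_cstar_colimit
    {A : Type*} [NormedRing A] [StarRing A] [CStarRing A] [CompleteSpace A]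
    [NormedAlgebra ℂ A] [StarModule ℂ A]
    {B : Type*} [NormedRing B] [StarRing B] [CStarRing B] [CompleteSpace B]
    [NormedAlgebra ℂ B] [StarModule ℂ B]
    (f : ∀ C : StarSubalgebra ℂ A, IsClosed (C : Set A) →
      (∀ x ∈ C, ∀ y ∈ C, x * y = y * x) → (↥C →⋆ₐ[ℂ] B))
    (hcomm : ∀ (C : StarSubalgebra ℂ A) (hC : IsClosed (C : Set A))
      (hc : ∀ x ∈ C, ∀ y ∈ C, x * y = y * x) (x y : ↥C),
      f C hC hc x * f C hC hc y = f C hC hc y * f C hC hc x)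
    (hcompat : ∀ (C D : StarSubalgebra ℂ A) (hC : IsClosed (C : Set A))
      (hD : IsClosed (D : Set A)) (hcC : ∀ x ∈ C, ∀ y ∈ C, x * y = y * x)
      (hcD : ∀ x ∈ D, ∀ y ∈ D, x * y = y * x) (h : C ≤ D) (a : A) (ha : a ∈ C),
      f D hD hcD ⟨a, h ha⟩ = f C hC hcC ⟨a, ha⟩) :
    ∃ m : {a : A // IsStarNormal a} → B,
      (∀ (C : StarSubalgebra ℂ A) (hC : IsClosed (C : Set A))
        (hc : ∀ x ∈ C, ∀ y ∈ C, x * y = y * x) (a : A) (ha : IsStarNormal a) (haC : a ∈ C),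
        m ⟨a, ha⟩ = f C hC hc ⟨a, haC⟩) ∧
      (∀ m' : {a : A // IsStarNormal a} → B,
        (∀ (C : StarSubalgebra ℂ A) (hC : IsClosed (C : Set A))
          (hc : ∀ x ∈ C, ∀ y ∈ C, x * y = y * x) (a : A) (ha : IsStarNormal a) (haC : a ∈ C),
          m' ⟨a, ha⟩ = f C hC hc ⟨a, haC⟩) → m' = m) ∧
      (∀ h1 : IsStarNormal (1 : A), m ⟨1, h1⟩ = 1) ∧
      (∀ (a : A) (ha : IsStarNormal a) (ha' : IsStarNormal (star a)),
        m ⟨star a, ha'⟩ = star (m ⟨a, ha⟩)) ∧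
      (∀ (z : ℂ) (a : A) (ha : IsStarNormal a) (hza : IsStarNormal (z • a)),
        m ⟨z • a, hza⟩ = z • m ⟨a, ha⟩) ∧
      (∀ (a b : A) (ha : IsStarNormal a) (hb : IsStarNormal b), a * b = b * a →
        ∀ (hab : IsStarNormal (a + b)) (hmul : IsStarNormal (a * b)),
          m ⟨a, ha⟩ * m ⟨b, hb⟩ = m ⟨b, hb⟩ * m ⟨a, ha⟩ ∧
          m ⟨a + b, hab⟩ = m ⟨a, ha⟩ + m ⟨b, hb⟩ ∧
          m ⟨a * b, hmul⟩ = m ⟨a, ha⟩ * m ⟨b, hb⟩) := by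
  have key : ∀ a : {a : A // IsStarNormal a}, ∃ v : B, ∀ (C : StarSubalgebra ℂ A)
      (hC : IsClosed (C : Set A)) (hc : ∀ x ∈ C, ∀ y ∈ C, x * y = y * x) (haC : a.1 ∈ C),
      v = f C hC hc ⟨a.1, haC⟩ := by
    rintro ⟨a, ha⟩
    obtain ⟨C, hC, hc, haC, -, hmin⟩ := exists_comm_closed_pair a a ha ha rfl
    exact ⟨f C hC hc ⟨a, haC⟩, fun D hD hd haD =>
      (hcompat C D hC hD hc hd (hmin D hD haD haD) a haC).symm⟩
  choose m hm using key
  refine ⟨m, fun C hC hc a ha haC => hm ⟨a, ha⟩ C hC hc haC, ?_, ?_, ?_, ?_, ?_⟩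
  · intro m' hm'
    funext ⟨a, ha⟩
    obtain ⟨C, hC, hc, haC, -, -⟩ := exists_comm_closed_pair a a ha ha rfl
    rw [hm' C hC hc a ha haC, hm ⟨a, ha⟩ C hC hc haC]
  · intro h1
    obtain ⟨C, hC, hc, haC, -, -⟩ := exists_comm_closed_pair (1 : A) 1 h1 h1 rfl
    rw [hm ⟨1, h1⟩ C hC hc haC]
    exact map_one (f C hC hc)
  · intro a ha ha'
    obtain ⟨C, hC, hc, haC, -, -⟩ := exists_comm_closed_pair a a ha ha rfl
    rw [hm ⟨a, ha⟩ C hC hc haC, hm ⟨star a, ha'⟩ C hC hc (star_mem haC)]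
    exact map_star (f C hC hc) ⟨a, haC⟩
  · intro z a ha ha'
    obtain ⟨C, hC, hc, haC, -, -⟩ := exists_comm_closed_pair a a ha ha rfl
    rw [hm ⟨a, ha⟩ C hC hc haC, hm ⟨z • a, ha'⟩ C hC hc (C.smul_mem haC z)]
    exact map_smul (f C hC hc) z ⟨a, haC⟩
  · intro a b ha hb hab hadd hmul
    obtain ⟨C, hC, hc, haC, hbC, -⟩ := exists_comm_closed_pair a b ha hb hab
    rw [hm ⟨a, ha⟩ C hC hc haC, hm ⟨b, hb⟩ C hC hc hbC,
      hm ⟨a + b, hadd⟩ C hC hc (add_mem haC hbC), hm ⟨a * b, hmul⟩ C hC hc (mul_mem haC hbC)]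
    exact ⟨hcomm C hC hc _ _, map_add (f C hC hc) ⟨a, haC⟩ ⟨b, hbC⟩,
      map_mul (f C hC hc) ⟨a, haC⟩ ⟨b, hbC⟩⟩
end

section
/- Let A be a unital C*-algebra over ℂ and let S ⊆ A. Then the topological closure of the unital ★-subalgebra of A generated by S has pairwise commuting elements if and only if every element of S is normal and the elements of S pairwise commute. -/
/-- The topological closure of the unital ★-subalgebra generated by a set `S` in a unital
C*-algebra is commutative if and only if the elements of `S` are normal and pairwise commute. -/
theorem closure_adjoin_comm_iff
    {A : Type*} [NormedRing A] [StarRing A] [CStarRing A] [CompleteSpace A]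
    [NormedAlgebra ℂ A] [StarModule ℂ A] (S : Set A) :
    (∀ x ∈ (StarAlgebra.adjoin ℂ S).topologicalClosure,
      ∀ y ∈ (StarAlgebra.adjoin ℂ S).topologicalClosure, x * y = y * x) ↔
    (∀ a ∈ S, IsStarNormal a) ∧ (∀ a ∈ S, ∀ b ∈ S, a * b = b * a) := by
  constructor
  · intro h
    have hS : ∀ a ∈ S, a ∈ (StarAlgebra.adjoin ℂ S).topologicalClosure := fun a ha =>
      StarSubalgebra.le_topologicalClosure _ (StarAlgebra.subset_adjoin ℂ S ha)
    exact ⟨fun a ha => ⟨h _ (star_mem (hS a ha)) _ (hS a ha)⟩,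
      fun a ha b hb => h _ (hS a ha) _ (hS b hb)⟩
  · rintro ⟨hn, hc⟩
    let : CStarAlgebra A := {}
    have hstar : ∀ a ∈ S, ∀ b ∈ S, a * star b = star b * a := by
      intro a ha b hb
      have h : Commute a b := hc a ha b hb
      exact ((hn b hb).commute_star_right h).eq
    have hcomm := StarAlgebra.isMulCommutative_adjoin ℂ hc hstar
    let := StarSubalgebra.commRingTopologicalClosure (StarAlgebra.adjoin ℂ S)
      hcomm.is_comm.comm
    intro x hx y hy
    exact congrArg Subtype.val (mul_comm (⟨x, hx⟩ : (StarAlgebra.adjoin ℂ S).topologicalClosure) ⟨y, hy⟩)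
end

section
/- Let A be a unital C*-algebra over ℂ, and let 𝒞(A) be the set of commutative C*-subalgebras of A partially ordered by inclusion. Then 𝒞(A) is directed (every two elements of 𝒞(A) have a common upper bound in 𝒞(A)) if and only if A is commutative. Moreover, if A is commutative then A itself is the greatest element of 𝒞(A). -/
/-- The poset `𝒞(A)` of commutative C*-subalgebras of a unital C*-algebra `A` (topologically
closed unital ★-subalgebras with pairwise commuting elements, ordered by inclusion) is directed
if and only if `A` is commutative; in that case `A` itself (i.e. `⊤`) is the greatest element
of `𝒞(A)`. -/
theorem commCStarSubalgebras_directed_iff_comm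
    {A : Type*} [NormedRing A] [StarRing A] [CStarRing A] [CompleteSpace A]
    [NormedAlgebra ℂ A] [StarModule ℂ A] :
    ((∀ C C' : StarSubalgebra ℂ A,
        IsClosed (C : Set A) → (∀ x ∈ C, ∀ y ∈ C, x * y = y * x) →
        IsClosed (C' : Set A) → (∀ x ∈ C', ∀ y ∈ C', x * y = y * x) →
        ∃ C'' : StarSubalgebra ℂ A, IsClosed (C'' : Set A) ∧
          (∀ x ∈ C'', ∀ y ∈ C'', x * y = y * x) ∧ C ≤ C'' ∧ C' ≤ C'') ↔
      (∀ x y : A, x * y = y * x)) ∧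
    ((∀ x y : A, x * y = y * x) →
      IsClosed ((⊤ : StarSubalgebra ℂ A) : Set A) ∧
      (∀ x ∈ (⊤ : StarSubalgebra ℂ A), ∀ y ∈ (⊤ : StarSubalgebra ℂ A), x * y = y * x) ∧
      (∀ C : StarSubalgebra ℂ A, IsClosed (C : Set A) →
        (∀ x ∈ C, ∀ y ∈ C, x * y = y * x) → C ≤ (⊤ : StarSubalgebra ℂ A))) := by
  refine ⟨⟨fun h => ?_, fun h C C' _ _ _ _ => ⟨⊤, isClosed_univ, fun x _ y _ => h x y,
    le_top, le_top⟩⟩, fun h => ⟨isClosed_univ, fun x _ y _ => h x y, fun C _ _ => le_top⟩⟩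
  have key : ∀ a : A, IsSelfAdjoint a → ∀ x ∈ StarAlgebra.elemental ℂ a,
      ∀ y ∈ StarAlgebra.elemental ℂ a, x * y = y * x := by
    intro a ha x hx y hy
    haveI : IsStarNormal a := ha.isStarNormal
    exact congrArg Subtype.val
      (mul_comm (⟨x, hx⟩ : StarAlgebra.elemental ℂ a) ⟨y, hy⟩)
  have sa : ∀ a b : A, IsSelfAdjoint a → IsSelfAdjoint b → Commute a b := by
    intro a b ha hb
    obtain ⟨D, -, hD, h1, h2⟩ := h (StarAlgebra.elemental ℂ a) (StarAlgebra.elemental ℂ b)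
      (StarAlgebra.elemental.isClosed ℂ a) (key a ha)
      (StarAlgebra.elemental.isClosed ℂ b) (key b hb)
    exact hD a (h1 (StarAlgebra.elemental.self_mem ℂ a)) b
      (h2 (StarAlgebra.elemental.self_mem ℂ b))
  intro x y
  change Commute x y
  rw [← realPart_add_I_smul_imaginaryPart x, ← realPart_add_I_smul_imaginaryPart y]
  have c : ∀ p q : selfAdjoint A, Commute (p : A) (q : A) := fun p q => sa p q p.2 q.2
  exact (((c _ _).add_right ((c _ _).smul_right _))).add_left
    ((((c _ _).add_right ((c _ _).smul_right _))).smul_left _)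
end

section
/- Let A, B be unital C*-algebras over ℂ and f : A → B a unital ★-algebra homomorphism. The following are equivalent: (a) for all commutative C*-subalgebras C, C' of A and every commutative C*-subalgebra D of B with f(C) ⊆ D and f(C') ⊆ D, there exists a commutative C*-subalgebra C'' of A with C ⊆ C'', C' ⊆ C'' and f(C'') ⊆ D; (b) for all normal elements a, a' ∈ A, if f(a) and f(a') commute then a and a' commute. -/
theorem closure_adjoin_comm_aux {A : Type*} [NormedRing A] [StarRing A] [CStarRing A]
    [NormedAlgebra ℂ A] [StarModule ℂ A] (s : Set A)
    (h : ∀ x ∈ s, ∀ y ∈ s, x * y = y * x)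
    (h' : ∀ x ∈ s, ∀ y ∈ s, x * star y = star y * x) :
    ∀ x ∈ (StarAlgebra.adjoin ℂ s).topologicalClosure,
      ∀ y ∈ (StarAlgebra.adjoin ℂ s).topologicalClosure, x * y = y * x := by
  have := StarAlgebra.isMulCommutative_adjoin ℂ h h'
  letI := StarSubalgebra.commRingTopologicalClosure (StarAlgebra.adjoin ℂ s)
    (fun x y => Subtype.ext (setLike_mul_comm x.2 y.2))
  intro x hx y hy
  exact congrArg Subtype.val
    (mul_comm (⟨x, hx⟩ : (StarAlgebra.adjoin ℂ s).topologicalClosure) ⟨y, hy⟩)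

theorem fuglede_aux {A : Type*} [NormedRing A] [StarRing A] [CStarRing A] [CompleteSpace A]
    [NormedAlgebra ℂ A] [StarModule ℂ A] {a x : A} (ha : IsStarNormal a)
    (h : x * a = a * x) : x * star a = star a * x := by
  letI : CStarAlgebra A := {}
  exact (ha.commute_star_right (x := x) h).eq

/-- For a unital ★-algebra homomorphism `f : A → B` of unital C*-algebras, the following are
equivalent: (a) whenever two commutative C*-subalgebras `C, C'` of `A` map into a common
commutative C*-subalgebra `D` of `B`, they are contained in a common commutative C*-subalgebra
`C''` of `A` mapping into `D`; (b) `f` reflects commeasurability: normal elements with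
commuting images commute. -/
theorem reflects_commeasurability_iff
    {A : Type*} [NormedRing A] [StarRing A] [CStarRing A] [CompleteSpace A]
    [NormedAlgebra ℂ A] [StarModule ℂ A]
    {B : Type*} [NormedRing B] [StarRing B] [CStarRing B] [CompleteSpace B]
    [NormedAlgebra ℂ B] [StarModule ℂ B]
    (f : A →⋆ₐ[ℂ] B) :
    (∀ (C C' : StarSubalgebra ℂ A) (D : StarSubalgebra ℂ B),
      IsClosed (C : Set A) → (∀ x ∈ C, ∀ y ∈ C, x * y = y * x) →
      IsClosed (C' : Set A) → (∀ x ∈ C', ∀ y ∈ C', x * y = y * x) →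
      IsClosed (D : Set B) → (∀ x ∈ D, ∀ y ∈ D, x * y = y * x) →
      f '' (C : Set A) ⊆ (D : Set B) → f '' (C' : Set A) ⊆ (D : Set B) →
      ∃ C'' : StarSubalgebra ℂ A, IsClosed (C'' : Set A) ∧
        (∀ x ∈ C'', ∀ y ∈ C'', x * y = y * x) ∧
        C ≤ C'' ∧ C' ≤ C'' ∧ f '' (C'' : Set A) ⊆ (D : Set B)) ↔
    (∀ a a' : A, IsStarNormal a → IsStarNormal a' →
      f a * f a' = f a' * f a → a * a' = a' * a) := by
  letI : CStarAlgebra A := {}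
  letI : CStarAlgebra B := {}
  have hf : Continuous f :=
    AddMonoidHomClass.continuous_of_bound f 1 fun a => by
      simpa using NonUnitalStarAlgHom.norm_apply_le f a
  constructor
  · intro H a a' ha ha' hc
    have hfa : IsStarNormal (f a) := ha.map f
    have hfa' : IsStarNormal (f a') := ha'.map f
    have hD : ∀ x ∈ ({f a, f a'} : Set B), ∀ y ∈ ({f a, f a'} : Set B), x * y = y * x := by
      rintro x (rfl | rfl) y (rfl | rfl)
      · rfl
      · exact hc
      · exact hc.symm
      · rfl
    have hnD : ∀ x ∈ ({f a, f a'} : Set B), IsStarNormal x := by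
      rintro x (rfl | rfl) <;> assumption
    have key : ∀ b : A, f b ∈ ({f a, f a'} : Set B) →
        f '' ((StarAlgebra.adjoin ℂ {b}).topologicalClosure : Set A) ⊆
        ((StarAlgebra.adjoin ℂ ({f a, f a'} : Set B)).topologicalClosure : Set B) := by
      intro b hb
      rw [Set.image_subset_iff]
      have : (StarAlgebra.adjoin ℂ {b}).topologicalClosure ≤
          ((StarAlgebra.adjoin ℂ ({f a, f a'} : Set B)).topologicalClosure).comap f := by
        refine StarSubalgebra.topologicalClosure_minimal (StarAlgebra.adjoin_le ?_)
          ((StarSubalgebra.isClosed_topologicalClosure _).preimage hf)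
        rintro x rfl
        exact StarSubalgebra.le_topologicalClosure _ (StarAlgebra.subset_adjoin ℂ _ hb)
      exact this
    have hs : ∀ b : A, IsStarNormal b → ∀ x ∈ (StarAlgebra.adjoin ℂ {b}).topologicalClosure,
      ∀ y ∈ (StarAlgebra.adjoin ℂ {b}).topologicalClosure, x * y = y * x := by
      intro b hb
      apply closure_adjoin_comm_aux
      · rintro x rfl y rfl
        rfl
      · rintro x rfl y rfl
        exact hb.star_comm_self.eq.symm
    obtain ⟨C, -, hC, h1, h2, -⟩ := H _ _ _ (StarSubalgebra.isClosed_topologicalClosure _)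
      (hs a ha) (StarSubalgebra.isClosed_topologicalClosure _) (hs a' ha')
      (StarSubalgebra.isClosed_topologicalClosure _)
      (closure_adjoin_comm_aux _ hD fun x hx y hy => fuglede_aux (hnD y hy) (hD x hx y hy))
      (key a (by simp)) (key a' (by simp))
    exact hC _ (h1 (StarSubalgebra.le_topologicalClosure _
        (StarAlgebra.self_mem_adjoin_singleton ℂ a))) _
      (h2 (StarSubalgebra.le_topologicalClosure _ (StarAlgebra.self_mem_adjoin_singleton ℂ a')))
  · intro H C C' D _ hC _ hC' hDc hD h1 h2
    have hn : ∀ x ∈ (C : Set A) ∪ C', IsStarNormal x := by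
      rintro x (hx | hx)
      · exact ⟨hC _ (star_mem hx) _ hx⟩
      · exact ⟨hC' _ (star_mem hx) _ hx⟩
    have hm : ∀ x ∈ (C : Set A) ∪ C', f x ∈ D := by
      rintro x (hx | hx)
      · exact h1 ⟨x, hx, rfl⟩
      · exact h2 ⟨x, hx, rfl⟩
    have hst : ∀ x ∈ (C : Set A) ∪ C', star x ∈ (C : Set A) ∪ C' := by
      rintro x (hx | hx)
      · exact Or.inl (star_mem hx)
      · exact Or.inr (star_mem hx)
    have hc : ∀ x ∈ (C : Set A) ∪ C', ∀ y ∈ (C : Set A) ∪ C', x * y = y * x :=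
      fun x hx y hy => H x y (hn x hx) (hn y hy) (hD _ (hm x hx) _ (hm y hy))
    refine ⟨(StarAlgebra.adjoin ℂ ((C : Set A) ∪ C')).topologicalClosure,
      StarSubalgebra.isClosed_topologicalClosure _,
      closure_adjoin_comm_aux _ hc fun x hx y hy => hc x hx _ (hst y hy), ?_, ?_, ?_⟩
    · exact fun x hx => StarSubalgebra.le_topologicalClosure _
        (StarAlgebra.subset_adjoin ℂ _ (Or.inl hx))
    · exact fun x hx => StarSubalgebra.le_topologicalClosure _
        (StarAlgebra.subset_adjoin ℂ _ (Or.inr hx))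
    · rw [Set.image_subset_iff]
      have : (StarAlgebra.adjoin ℂ ((C : Set A) ∪ C')).topologicalClosure ≤ D.comap f :=
        StarSubalgebra.topologicalClosure_minimal (StarAlgebra.adjoin_le hm) (hDc.preimage hf)
      exact this
end

section
/- Let A be a unital C*-algebra over ℂ, and let L be a Boolean algebra. Suppose that for every commutative C*-subalgebra C of A we are given a map g_C from the set of projections of C to L satisfying g_C(0) = ⊥, g_C(1) = ⊤, g_C(1 − p) = (g_C p)ᶜ, g_C(p·q) = g_C p ⊓ g_C q and g_C(p + q − p·q) = g_C p ⊔ g_C q for all projections p, q ∈ C, and that the family is compatible: if C ⊆ D then g_D agrees with g_C on projections of C. Then there exists a unique map m from the set of all projections of A to L such that m(p) = g_C(p) whenever the projection p lies in a commutative C*-subalgebra C; moreover m(0) = ⊥, m(1) = ⊤, m(1 − p) = (m p)ᶜ, and m(p·q) = m p ⊓ m q and m(p + q − p·q) = m p ⊔ m q for all commuting projections p, q of A. -/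
lemma exists_comm_closed {A : Type*} [NormedRing A] [StarRing A] [CStarRing A]
    [NormedAlgebra ℂ A] [StarModule ℂ A] (p q : A) (hp : star p = p) (hq : star q = q)
    (h : p * q = q * p) :
    ∃ C : StarSubalgebra ℂ A, IsClosed (C : Set A) ∧ (∀ x ∈ C, ∀ y ∈ C, x * y = y * x) ∧
      p ∈ C ∧ q ∈ C := by
  have hcomm : ∀ a ∈ ({p, q} : Set A), ∀ b ∈ ({p, q} : Set A), a * b = b * a := by
    rintro a (rfl | rfl) b (rfl | rfl) <;> simp [h]
  have hcs : ∀ a ∈ ({p, q} : Set A), ∀ b ∈ ({p, q} : Set A), a * star b = star b * a := by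
    rintro a (rfl | rfl) b (rfl | rfl) <;> simp [h, hp, hq]
  letI := StarAlgebra.adjoinCommRingOfComm ℂ hcomm hcs
  letI := StarSubalgebra.commRingTopologicalClosure (StarAlgebra.adjoin ℂ ({p, q} : Set A))
    mul_comm
  refine ⟨(StarAlgebra.adjoin ℂ ({p, q} : Set A)).topologicalClosure,
    StarSubalgebra.isClosed_topologicalClosure _, ?_, ?_, ?_⟩
  · intro x hx y hy
    exact congrArg Subtype.val (mul_comm
      (⟨x, hx⟩ : (StarAlgebra.adjoin ℂ ({p, q} : Set A)).topologicalClosure) ⟨y, hy⟩)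
  · exact StarSubalgebra.le_topologicalClosure _ (StarAlgebra.subset_adjoin ℂ _ (by simp))
  · exact StarSubalgebra.le_topologicalClosure _ (StarAlgebra.subset_adjoin ℂ _ (by simp))

/-- **Colimit property of the partial Boolean algebra of projections of a C*-algebra.**
Given a compatible family of Boolean-operation-preserving maps `g C` from the projections of
each commutative C*-subalgebra `C` of `A` into a Boolean algebra `L`, there is a unique map `m`
from the projections of `A` to `L` agreeing with each `g C`, and `m` preserves `⊥`, `⊤`,
complement, and meets and joins of commuting projections. -/
theorem projections_colimit
    {A : Type*} [NormedRing A] [StarRing A] [CStarRing A] [CompleteSpace A]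
    [NormedAlgebra ℂ A] [StarModule ℂ A]
    {L : Type*} [BooleanAlgebra L]
    (g : ∀ C : StarSubalgebra ℂ A, IsClosed (C : Set A) →
      (∀ x ∈ C, ∀ y ∈ C, x * y = y * x) →
      ∀ p : A, p ∈ C → star p = p → p * p = p → L)
    (g_bot : ∀ C hC hc h0 hs hi, g C hC hc 0 h0 hs hi = ⊥)
    (g_top : ∀ C hC hc h1 hs hi, g C hC hc 1 h1 hs hi = ⊤)
    (g_compl : ∀ C hC hc (p : A) (hp : p ∈ C) (hps : star p = p) (hpi : p * p = p)
      (hp' : (1 : A) - p ∈ C) (hps' : star ((1 : A) - p) = 1 - p)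
      (hpi' : ((1 : A) - p) * (1 - p) = 1 - p),
      g C hC hc (1 - p) hp' hps' hpi' = (g C hC hc p hp hps hpi)ᶜ)
    (g_inf : ∀ C hC hc (p q : A) (hp : p ∈ C) (hps : star p = p) (hpi : p * p = p)
      (hq : q ∈ C) (hqs : star q = q) (hqi : q * q = q)
      (hpq : p * q ∈ C) (hpqs : star (p * q) = p * q) (hpqi : (p * q) * (p * q) = p * q),
      g C hC hc (p * q) hpq hpqs hpqi = g C hC hc p hp hps hpi ⊓ g C hC hc q hq hqs hqi)
    (g_sup : ∀ C hC hc (p q : A) (hp : p ∈ C) (hps : star p = p) (hpi : p * p = p)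
      (hq : q ∈ C) (hqs : star q = q) (hqi : q * q = q)
      (hpq : p + q - p * q ∈ C) (hpqs : star (p + q - p * q) = p + q - p * q)
      (hpqi : (p + q - p * q) * (p + q - p * q) = p + q - p * q),
      g C hC hc (p + q - p * q) hpq hpqs hpqi
        = g C hC hc p hp hps hpi ⊔ g C hC hc q hq hqs hqi)
    (g_compat : ∀ C D hC hD hcC hcD, C ≤ D → ∀ (p : A) (hp : p ∈ C) (hpD : p ∈ D)
      (hps : star p = p) (hpi : p * p = p),
      g D hD hcD p hpD hps hpi = g C hC hcC p hp hps hpi) :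
    ∃ m : ∀ p : A, star p = p → p * p = p → L,
      (∀ C hC hc (p : A) (hp : p ∈ C) (hps : star p = p) (hpi : p * p = p),
        m p hps hpi = g C hC hc p hp hps hpi) ∧
      (∀ m' : ∀ p : A, star p = p → p * p = p → L,
        (∀ C hC hc (p : A) (hp : p ∈ C) (hps : star p = p) (hpi : p * p = p),
          m' p hps hpi = g C hC hc p hp hps hpi) → m' = m) ∧
      (∀ hs hi, m 0 hs hi = ⊥) ∧
      (∀ hs hi, m 1 hs hi = ⊤) ∧
      (∀ (p : A) (hps : star p = p) (hpi : p * p = p) hs' hi',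
        m (1 - p) hs' hi' = (m p hps hpi)ᶜ) ∧
      (∀ (p q : A) (hps : star p = p) (hpi : p * p = p)
        (hqs : star q = q) (hqi : q * q = q), p * q = q * p →
        (∀ hs hi, m (p * q) hs hi = m p hps hpi ⊓ m q hqs hqi) ∧
        (∀ hs hi, m (p + q - p * q) hs hi = m p hps hpi ⊔ m q hqs hqi)) := by
  have hcE : ∀ p : A, star p = p → ∀ x ∈ StarAlgebra.elemental ℂ p,
      ∀ y ∈ StarAlgebra.elemental ℂ p, x * y = y * x := by
    intro p hp x hx y hy
    obtain ⟨C, hC, hc, hpC, -⟩ := exists_comm_closed p p hp hp rfl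
    have hle := StarAlgebra.elemental.le_of_mem hC hpC
    exact hc x (hle hx) y (hle hy)
  let m : ∀ p : A, star p = p → p * p = p → L := fun p hs hi =>
    g (StarAlgebra.elemental ℂ p) (StarAlgebra.elemental.isClosed ℂ p) (hcE p hs) p
      (StarAlgebra.elemental.self_mem ℂ p) hs hi
  have hm : ∀ C hC hc (p : A) (hp : p ∈ C) (hps : star p = p) (hpi : p * p = p),
      m p hps hpi = g C hC hc p hp hps hpi := fun C hC hc p hp hps hpi =>
    (g_compat _ C _ hC _ hc (StarAlgebra.elemental.le_of_mem hC hp) p _ hp hps hpi).symm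
  refine ⟨m, hm, ?_, ?_, ?_, ?_, ?_⟩
  · intro m' hm'
    funext p hs hi
    exact hm' _ _ _ p _ hs hi
  · intro hs hi
    exact g_bot _ _ _ _ hs hi
  · intro hs hi
    exact g_top _ _ _ _ hs hi
  · intro p hps hpi hs' hi'
    obtain ⟨C, hC, hc, hp, -⟩ := exists_comm_closed p p hps hps rfl
    rw [hm C hC hc p hp, hm C hC hc (1 - p) (sub_mem (one_mem C) hp)]
    exact g_compl _ _ _ _ _ _ _ _ _ _
  · intro p q hps hpi hqs hqi hpq
    obtain ⟨C, hC, hc, hp, hq⟩ := exists_comm_closed p q hps hqs hpq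
    constructor
    · intro hs hi
      rw [hm C hC hc p hp, hm C hC hc q hq, hm C hC hc (p * q) (mul_mem hp hq)]
      exact g_inf _ _ _ _ _ _ _ _ _ _ _ _ _ _
    · intro hs hi
      rw [hm C hC hc p hp, hm C hC hc q hq,
        hm C hC hc (p + q - p * q) (sub_mem (add_mem hp hq) (mul_mem hp hq))]
      exact g_sup _ _ _ _ _ _ _ _ _ _ _ _ _ _
end
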